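/- For every 7-dimensional simplicial convex polytope P ⊂ ℝ⁷, the face numbers satisfy: f₃ = 5f₂ − 15f₁ + 35f₀ − 70, f₄ = 9f₂ − 34f₁ + 84f₀ − 168, f₅ = 7f₂ − 28f₁ + 70f₀ − 140, and f₆ = 2f₂ − 8f₁ + 20f₀ − 40. -/

import Mathlib

open scoped BigOperators

noncomputable section

/-- Dimension of a subset of a real vector space: the rank of its vector span. -/
def sdim {n : ℕ} (s : Set (EuclideanSpace ℝ (Fin n))) : ℕ :=
  Module.finrank ℝ (vectorSpan ℝ s)

/-- An `n`-dimensional convex polytope in `ℝⁿ`: the convex hull of a finite set of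
points, with nonempty interior. -/
structure ConvexPolytope (n : ℕ) where
  verts : Finset (EuclideanSpace ℝ (Fin n))
  nonempty_int :
    (interior (convexHull ℝ (verts : Set (EuclideanSpace ℝ (Fin n))))).Nonempty

/-- `F` is an `m`-simplex: the convex hull of `m` affinely independent points. -/
def IsSimplexSet {n : ℕ} (F : Set (EuclideanSpace ℝ (Fin n))) (m : ℕ) : Prop :=
  ∃ s : Finset (EuclideanSpace ℝ (Fin n)),
    s.card = m ∧
    AffineIndependent ℝ (fun v : s => (v : EuclideanSpace ℝ (Fin n))) ∧
    F = convexHull ℝ (s : Set (EuclideanSpace ℝ (Fin n)))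

namespace ConvexPolytope

variable {n : ℕ} (P : ConvexPolytope n)

/-- The underlying set of the polytope. -/
def carrier : Set (EuclideanSpace ℝ (Fin n)) :=
  convexHull ℝ (P.verts : Set (EuclideanSpace ℝ (Fin n)))

/-- The `k`-faces of `P`: the `k`-dimensional (nonempty) exposed faces of `P`. -/
def faces (k : ℕ) : Set (Set (EuclideanSpace ℝ (Fin n))) :=
  {F | IsExposed ℝ P.carrier F ∧ F.Nonempty ∧ sdim F = k}

/-- `f_k(P)`: the number of `k`-faces of `P` (for `0 ≤ k ≤ n`). -/
def fcount (k : ℕ) : ℕ := (P.faces k).ncard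

/-- The face numbers with integer index and the conventions `f₋₁ = fₙ = 1`. -/
def fZ (k : ℤ) : ℕ :=
  if k = -1 ∨ k = (n : ℤ) then 1
  else if 0 ≤ k ∧ k < (n : ℤ) then P.fcount k.toNat
  else 0

/-- `P` is simplicial: every facet is an `(n-1)`-simplex, i.e. the convex hull of `n`
affinely independent points. -/
def IsSimplicial : Prop :=
  ∀ F ∈ P.faces (n - 1), IsSimplexSet F n

/-- `P` is simple at edges: every `1`-dimensional face of `P` is contained in exactly
`n - 1` facets. -/
def SimpleAtEdges : Prop :=
  ∀ L ∈ P.faces 1, {F ∈ P.faces (n - 1) | L ⊆ F}.ncard = n - 1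

end ConvexPolytope

/-- The `l`-faces of a face `F`: the `l`-dimensional (nonempty) exposed faces of `F`. -/
def subfaces {n : ℕ} (F : Set (EuclideanSpace ℝ (Fin n))) (l : ℕ) :
    Set (Set (EuclideanSpace ℝ (Fin n))) :=
  {G | IsExposed ℝ F G ∧ G.Nonempty ∧ sdim G = l}

/-!
Cone the facets of the polytope from an interior point `z`; since they are simplices, this gives a
complete simplicial fan, whose cones correspond to the sets of vertices of the proper faces. Fix a
vector `v` on no wall of the fan. For a face `t`, the point `∑ j ∈ t, (j - z) + ε • v` with small
`ε > 0` lies in the cone of exactly one facet `s`, and this `s` is characterised by `N s ⊆ t ⊆ s`,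
where `N s` is the set of vertices of `s` at which the coordinate of `v` is negative. Hence the
intervals `[N s, s]` partition the faces, and
`F(X) := ∑ₜ X ^ |t| = ∑ₛ X ^ |N s| * (1 + X) ^ (n - |N s|)`.
Passing from `v` to `-v` replaces `N s` by its complement in `s`, which exchanges the two exponents,
so `F(-1 - X) = (-1) ^ n * F(X)`. Comparing coefficients gives the Dehn–Sommerville relations.
-/

section Fan

open Filter Topology Polynomial

lemma eventually_pos_add_mul {x y : ℝ} (h : 0 < x ∨ x = 0 ∧ 0 < y) :
    ∀ᶠ ε : ℝ in 𝓝[>] 0, 0 < x + ε * y := by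
  rcases h with hx | ⟨rfl, hy⟩
  · have hlim : Tendsto (fun ε : ℝ => x + ε * y) (𝓝 0) (𝓝 (x + 0 * y)) :=
      Continuous.tendsto (by fun_prop) 0
    exact (hlim.mono_left nhdsWithin_le_nhds).eventually_const_lt (by simpa using hx)
  · filter_upwards [self_mem_nhdsWithin] with ε (hε : 0 < ε)
    simpa using mul_pos hε hy

variable {ι V : Type*} [AddCommGroup V] [Module ℝ V]

/-- The vectors `ray i`, `i ∈ s`, form a basis of `V`. -/
def IsBasisOn (ray : ι → V) (s : Finset ι) : Prop :=
  LinearIndepOn ℝ ray s ∧ Submodule.span ℝ (ray '' s) = ⊤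

open Classical in
/-- The `i`-th coordinate functional with respect to the basis `ray j`, `j ∈ s`, of `V`; it is `0`
if these vectors do not form a basis or if `i ∉ s`. -/
def coneCoord (ray : ι → V) (s : Finset ι) (i : ι) : V →ₗ[ℝ] ℝ :=
  if h : IsBasisOn ray s ∧ i ∈ s then
    (Module.Basis.mk h.1.1
      (by rw [← Set.image_eq_range, h.1.2])).coord ⟨i, h.2⟩
  else 0

lemma IsBasisOn.exists_basis {ray : ι → V} {s : Finset ι} (hs : IsBasisOn ray s) :
    ∃ b : Module.Basis s ℝ V,
      (∀ i, b i = ray i) ∧ ∀ i (hi : i ∈ s), coneCoord ray s i = b.coord ⟨i, hi⟩ := by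
  refine ⟨Module.Basis.mk hs.1 (by rw [← Set.image_eq_range, hs.2]), fun i => ?_, fun i hi => ?_⟩
  · exact Module.Basis.mk_apply ..
  · exact dif_pos ⟨hs, hi⟩

lemma IsBasisOn.sum_coneCoord_smul {ray : ι → V} {s : Finset ι} (hs : IsBasisOn ray s) (q : V) :
    ∑ i ∈ s, coneCoord ray s i q • ray i = q := by
  obtain ⟨b, hray, hcoord⟩ := hs.exists_basis
  rw [← Finset.sum_coe_sort]
  simpa only [hray, hcoord _ (Subtype.prop _), Module.Basis.coord_apply] using b.sum_repr q

lemma IsBasisOn.coneCoord_ray [DecidableEq ι] {ray : ι → V} {s : Finset ι}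
    (hs : IsBasisOn ray s) {i j : ι} (hi : i ∈ s) (hj : j ∈ s) :
    coneCoord ray s i (ray j) = if i = j then 1 else 0 := by
  obtain ⟨b, hray, hcoord⟩ := hs.exists_basis
  rw [hcoord i hi, ← hray ⟨j, hj⟩]
  simp [Finsupp.single_apply, eq_comm]

lemma IsBasisOn.coneCoord_sum_ray [DecidableEq ι] {ray : ι → V} {s t : Finset ι}
    (hs : IsBasisOn ray s) (hts : t ⊆ s) {i : ι} (hi : i ∈ s) :
    coneCoord ray s i (∑ j ∈ t, ray j) = if i ∈ t then 1 else 0 := by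
  rw [map_sum, Finset.sum_congr rfl fun j hj => hs.coneCoord_ray hi (hts hj)]
  simp

lemma IsBasisOn.apply_eq_sum_coneCoord {ray : ι → V} {s : Finset ι} (hs : IsBasisOn ray s)
    (g : V →ₗ[ℝ] ℝ) (q : V) : g q = ∑ i ∈ s, coneCoord ray s i q * g (ray i) := by
  conv_lhs => rw [← hs.sum_coneCoord_smul q]
  simp only [map_sum, map_smul, smul_eq_mul]

/-- The simplicial cone spanned by the vectors `ray i`, `i ∈ s`, provided these form a basis. -/
def simplicialCone (ray : ι → V) (s : Finset ι) : Set V :=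
  {q | ∀ i ∈ s, 0 ≤ coneCoord ray s i q}

lemma mem_simplicialCone_of_smul_mem {ray : ι → V} {s : Finset ι} {q : V} {c : ℝ} (hc : 0 < c)
    (hq : c • q ∈ simplicialCone ray s) : q ∈ simplicialCone ray s := fun i hi => by
  have hnonneg := hq i hi
  rw [map_smul] at hnonneg
  exact nonneg_of_mul_nonneg_right hnonneg hc

lemma IsBasisOn.apply_le_sum_coneCoord {ray : ι → V} {s : Finset ι} (hs : IsBasisOn ray s)
    {g : V →ₗ[ℝ] ℝ} (hg : ∀ i ∈ s, g (ray i) ≤ 1) {q : V} (hq : q ∈ simplicialCone ray s) :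
    g q ≤ ∑ i ∈ s, coneCoord ray s i q := by
  rw [hs.apply_eq_sum_coneCoord g q]
  exact Finset.sum_le_sum fun i hi => mul_le_of_le_one_right (hq i hi) (hg i hi)

lemma IsBasisOn.sum_ray_mem_simplicialCone {ray : ι → V} {s t : Finset ι} (hs : IsBasisOn ray s)
    (hts : t ⊆ s) : ∑ j ∈ t, ray j ∈ simplicialCone ray s := by
  classical
  intro i hi
  rw [hs.coneCoord_sum_ray hts hi]
  split_ifs <;> norm_num

/-- The cones over the sets in `facets` form a complete simplicial fan which is the fan of cones
over the proper faces of a convex polytope: the functional `g` in `exists_support` is the equation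
`g = 1` of the facet whose vertices are `ray i`, `i ∈ s`. -/
structure IsPolytopalFan (ray : ι → V) (facets : Finset (Finset ι)) : Prop where
  isBasisOn : ∀ s ∈ facets, IsBasisOn ray s
  exists_support : ∀ s ∈ facets, ∃ g : V →ₗ[ℝ] ℝ, (∀ i ∈ s, g (ray i) = 1) ∧
    ∀ s' ∈ facets, ∀ i ∈ s', i ∉ s → g (ray i) < 1
  exists_mem_simplicialCone : ∀ q, ∃ s ∈ facets, q ∈ simplicialCone ray s

/-- `v` lies on no wall of the fan. -/
def IsGeneric (ray : ι → V) (facets : Finset (Finset ι)) (v : V) : Prop :=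
  ∀ s ∈ facets, ∀ i ∈ s, coneCoord ray s i v ≠ 0

lemma IsGeneric.neg {ray : ι → V} {facets : Finset (Finset ι)} {v : V}
    (hv : IsGeneric ray facets v) : IsGeneric ray facets (-v) := fun s hs i hi => by
  simpa using hv s hs i hi

/-- The set of those `i ∈ s` for which the `i`-th coordinate of `v` is negative. For generic `v`
it plays the role of the restriction set of the facet `s` in a shelling. -/
def negativeRays (ray : ι → V) (v : V) (s : Finset ι) : Finset ι :=
  s.filter fun i => coneCoord ray s i v < 0

lemma negativeRays_subset (ray : ι → V) (v : V) (s : Finset ι) : negativeRays ray v s ⊆ s :=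
  Finset.filter_subset _ _

lemma IsGeneric.card_negativeRays_neg_add {ray : ι → V} {facets : Finset (Finset ι)} {v : V}
    (hv : IsGeneric ray facets v) {s : Finset ι} (hs : s ∈ facets) :
    (negativeRays ray (-v) s).card + (negativeRays ray v s).card = s.card := by
  have hneg : negativeRays ray (-v) s = s.filter fun i => ¬ coneCoord ray s i v < 0 := by
    refine Finset.filter_congr fun i hi => ?_
    rw [map_neg, neg_lt_zero, not_lt]
    exact (hv s hs i hi).symm.le_iff_lt.symm
  rw [hneg, add_comm]
  exact Finset.card_filter_add_card_filter_not _

namespace IsPolytopalFan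

variable {ray : ι → V} {facets : Finset (Finset ι)}

lemma exists_isGeneric (hfan : IsPolytopalFan ray facets) : ∃ v, IsGeneric ray facets v := by
  classical
  let walls : Finset (Submodule ℝ V) :=
    facets.biUnion fun s => s.image fun i => LinearMap.ker (coneCoord ray s i)
  have htop : ⊤ ∉ walls := by
    simp only [walls, Finset.mem_biUnion, Finset.mem_image]
    rintro ⟨s, hs, i, hi, hker⟩
    have hray := (hfan.isBasisOn s hs).coneCoord_ray hi hi
    rw [LinearMap.ker_eq_top.1 hker] at hray
    simp at hray
  obtain ⟨v, hv⟩ := (Set.ne_univ_iff_exists_notMem _).1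
    (Subspace.biUnion_ne_univ_of_top_notMem htop)
  refine ⟨v, fun s hs i hi hzero => hv ?_⟩
  have hwall : LinearMap.ker (coneCoord ray s i) ∈ walls :=
    Finset.mem_biUnion.2 ⟨s, hs, Finset.mem_image_of_mem _ hi⟩
  exact Set.mem_biUnion hwall hzero

-- Both facet functionals are at most `1` on the rays of the other facet, so they agree at `q`.
lemma mem_of_coneCoord_pos (hfan : IsPolytopalFan ray facets) {s s' : Finset ι}
    (hs : s ∈ facets) (hs' : s' ∈ facets) {q : V} (hq : q ∈ simplicialCone ray s)
    (hq' : q ∈ simplicialCone ray s') {i : ι} (hi : i ∈ s) (hpos : 0 < coneCoord ray s i q) :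
    i ∈ s' := by
  by_contra his'
  have hbasis := hfan.isBasisOn s hs
  have hbasis' := hfan.isBasisOn s' hs'
  obtain ⟨g, hg_one, hg_lt⟩ := hfan.exists_support s hs
  obtain ⟨g', hg'_one, hg'_lt⟩ := hfan.exists_support s' hs'
  have hg_le : ∀ j ∈ s', g (ray j) ≤ 1 := fun j hj => by
    by_cases hjs : j ∈ s
    · exact (hg_one j hjs).le
    · exact (hg_lt s' hs' j hj hjs).le
  have hg'_le : ∀ j ∈ s, g' (ray j) ≤ 1 := fun j hj => by
    by_cases hjs : j ∈ s'
    · exact (hg'_one j hjs).le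
    · exact (hg'_lt s hs j hj hjs).le
  have hlt : g' q < g q := by
    rw [hbasis.apply_eq_sum_coneCoord g' q, hbasis.apply_eq_sum_coneCoord g q]
    refine Finset.sum_lt_sum (fun j hj => ?_) ⟨i, hi, ?_⟩
    · rw [hg_one j hj]
      exact mul_le_mul_of_nonneg_left (hg'_le j hj) (hq j hj)
    · rw [hg_one i hi]
      exact mul_lt_mul_of_pos_left (hg'_lt s hs i hi his') hpos
  have hle : g q ≤ g' q := by
    rw [hbasis'.apply_eq_sum_coneCoord g' q,
      Finset.sum_congr rfl fun j hj => by rw [hg'_one j hj, mul_one]]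
    exact hbasis'.apply_le_sum_coneCoord hg_le hq'
  exact hlt.not_ge hle

lemma exists_facet_lex (hfan : IsPolytopalFan ray facets) (p v : V) :
    ∃ s ∈ facets, ∀ i ∈ s,
      0 ≤ coneCoord ray s i p ∧ (coneCoord ray s i p = 0 → 0 ≤ coneCoord ray s i v) := by
  by_contra! hcon
  have hneg : ∀ᶠ ε : ℝ in 𝓝[>] 0, ∀ s ∈ facets, p + ε • v ∉ simplicialCone ray s := by
    refine (Filter.eventually_all_finset _).2 fun s hs => ?_
    obtain ⟨i, hi, hlex⟩ := hcon s hs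
    have hsign : 0 < -coneCoord ray s i p ∨
        -coneCoord ray s i p = 0 ∧ 0 < -coneCoord ray s i v := by
      rcases lt_or_ge (coneCoord ray s i p) 0 with hp | hp
      · exact Or.inl (neg_pos.2 hp)
      · exact Or.inr ⟨neg_eq_zero.2 (hlex hp).1, neg_pos.2 (hlex hp).2⟩
    filter_upwards [eventually_pos_add_mul hsign] with ε hε hmem
    have hnonneg := hmem i hi
    rw [map_add, map_smul, smul_eq_mul] at hnonneg
    linarith
  obtain ⟨ε, hε⟩ := hneg.exists
  obtain ⟨s, hs, hmem⟩ := hfan.exists_mem_simplicialCone (p + ε • v)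
  exact hε s hs hmem

lemma eventually_coneCoord_pos (hfan : IsPolytopalFan ray facets) {v : V}
    (hv : IsGeneric ray facets v) {s t : Finset ι} (hs : s ∈ facets) (hts : t ⊆ s)
    (hneg : negativeRays ray v s ⊆ t) :
    ∀ᶠ ε : ℝ in 𝓝[>] 0, ∀ i ∈ s, 0 < coneCoord ray s i (∑ j ∈ t, ray j + ε • v) := by
  classical
  refine (Filter.eventually_all_finset _).2 fun i hi => ?_
  simp only [map_add, map_smul, smul_eq_mul]
  apply eventually_pos_add_mul
  rw [(hfan.isBasisOn s hs).coneCoord_sum_ray hts hi]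
  by_cases hit : i ∈ t
  · simp [hit]
  · have hnonneg : 0 ≤ coneCoord ray s i v :=
      not_lt.1 fun hlt => hit (hneg (Finset.mem_filter.2 ⟨hi, hlt⟩))
    exact Or.inr ⟨if_neg hit, hnonneg.lt_of_ne (hv s hs i hi).symm⟩

-- The facet in question is the one whose cone contains `∑ j ∈ t, ray j + ε • v` for small `ε > 0`.
lemma existsUnique_facet (hfan : IsPolytopalFan ray facets) {v : V}
    (hv : IsGeneric ray facets v) {s₀ t : Finset ι} (hs₀ : s₀ ∈ facets) (hts₀ : t ⊆ s₀) :
    ∃! s, s ∈ facets ∧ t ⊆ s ∧ negativeRays ray v s ⊆ t := by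
  classical
  obtain ⟨s, hs, hlex⟩ := hfan.exists_facet_lex (∑ j ∈ t, ray j) v
  have hts : t ⊆ s := fun j hj =>
    hfan.mem_of_coneCoord_pos hs₀ hs ((hfan.isBasisOn s₀ hs₀).sum_ray_mem_simplicialCone hts₀)
      (fun i hi => (hlex i hi).1) (hts₀ hj)
      (by simp [(hfan.isBasisOn s₀ hs₀).coneCoord_sum_ray hts₀ (hts₀ hj), hj])
  have hneg : negativeRays ray v s ⊆ t := fun i hi => by
    obtain ⟨his, hlt⟩ := Finset.mem_filter.1 hi
    by_contra hit
    refine hlt.not_ge ((hlex i his).2 ?_)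
    rw [(hfan.isBasisOn s hs).coneCoord_sum_ray hts his, if_neg hit]
  refine ⟨s, ⟨hs, hts, hneg⟩, ?_⟩
  rintro s' ⟨hs', hts', hneg'⟩
  obtain ⟨ε, hpos, hpos'⟩ := ((hfan.eventually_coneCoord_pos hv hs hts hneg).and
    (hfan.eventually_coneCoord_pos hv hs' hts' hneg')).exists
  have hmem := fun i hi => (hpos i hi).le
  have hmem' := fun i hi => (hpos' i hi).le
  exact Finset.Subset.antisymm
    (fun i hi => hfan.mem_of_coneCoord_pos hs' hs hmem' hmem hi (hpos' i hi))
    (fun i hi => hfan.mem_of_coneCoord_pos hs hs' hmem hmem' hi (hpos i hi))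

end IsPolytopalFan

/-- The `f`-polynomial `∑ₜ X ^ |t|` of a family of finite sets: its `k`-th coefficient is the number
of members with `k` elements, that is, of faces of dimension `k - 1`. -/
def facePolynomial (faces : Finset (Finset ι)) : ℤ[X] :=
  ∑ t ∈ faces, X ^ t.card

lemma coeff_facePolynomial (faces : Finset (Finset ι)) (k : ℕ) :
    (facePolynomial faces).coeff k = (faces.filter fun t => t.card = k).card := by
  simp [facePolynomial, Polynomial.coeff_X_pow, Finset.sum_boole, eq_comm]

variable [DecidableEq ι]

/-- The simplicial complex with the given facets. It contains the empty face as soon as there is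
a facet. -/
def faceComplex (facets : Finset (Finset ι)) : Finset (Finset ι) :=
  facets.biUnion Finset.powerset

lemma mem_faceComplex {facets : Finset (Finset ι)} {t : Finset ι} :
    t ∈ faceComplex facets ↔ ∃ s ∈ facets, t ⊆ s := by
  simp only [faceComplex, Finset.mem_biUnion, Finset.mem_powerset]

lemma facePolynomial_Icc {s t : Finset ι} (hst : s ⊆ t) :
    facePolynomial (Finset.Icc s t) = X ^ s.card * (1 + X) ^ (t.card - s.card) := by
  have hdisj : ∀ u ∈ (t \ s).powerset, Disjoint s u := fun u hu =>
    Finset.disjoint_sdiff.mono_right (Finset.mem_powerset.1 hu)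
  have hinj : Set.InjOn (s ∪ ·) ((t \ s).powerset : Set (Finset ι)) := fun u hu w hw huw => by
    rw [← Finset.union_sdiff_cancel_left (hdisj u hu),
      ← Finset.union_sdiff_cancel_left (hdisj w hw)]
    exact congrArg (· \ s) huw
  rw [facePolynomial, Finset.Icc_eq_image_powerset hst, Finset.sum_image hinj,
    ← Finset.card_sdiff_of_subset hst, add_comm, ← Finset.sum_pow_mul_eq_add_pow, Finset.mul_sum]
  refine Finset.sum_congr rfl fun u hu => ?_
  rw [Finset.card_union_of_disjoint (hdisj u hu), one_pow, mul_one, pow_add]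

namespace IsPolytopalFan

variable {ray : ι → V} {facets : Finset (Finset ι)}

lemma facePolynomial_eq_sum (hfan : IsPolytopalFan ray facets) {v : V}
    (hv : IsGeneric ray facets v) :
    facePolynomial (faceComplex facets) = ∑ s ∈ facets,
      X ^ (negativeRays ray v s).card * (1 + X) ^ (s.card - (negativeRays ray v s).card) := by
  have hpartition : faceComplex facets =
      facets.biUnion fun s => Finset.Icc (negativeRays ray v s) s := by
    ext t
    simp only [mem_faceComplex, Finset.mem_biUnion, Finset.mem_Icc]
    constructor
    · rintro ⟨s₀, hs₀, hts₀⟩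
      obtain ⟨s, hs, hts, hneg⟩ := (hfan.existsUnique_facet hv hs₀ hts₀).exists
      exact ⟨s, hs, hneg, hts⟩
    · rintro ⟨s, hs, -, hts⟩
      exact ⟨s, hs, hts⟩
  have hdisj : (facets : Set (Finset ι)).PairwiseDisjoint
      fun s => Finset.Icc (negativeRays ray v s) s := by
    intro s hs s' hs' hne
    refine Finset.disjoint_left.2 fun t ht ht' => hne ?_
    rw [Finset.mem_Icc] at ht ht'
    exact (hfan.existsUnique_facet hv hs ht.2).unique ⟨hs, ht.2, ht.1⟩ ⟨hs', ht'.2, ht'.1⟩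
  rw [facePolynomial, hpartition, Finset.sum_biUnion hdisj]
  exact Finset.sum_congr rfl fun s _ => facePolynomial_Icc (negativeRays_subset ray v s)

lemma facePolynomial_comp (hfan : IsPolytopalFan ray facets) {d : ℕ}
    (hd : ∀ s ∈ facets, s.card = d) :
    (facePolynomial (faceComplex facets)).comp (-(1 + X)) =
      (-1) ^ d * facePolynomial (faceComplex facets) := by
  obtain ⟨v, hv⟩ := hfan.exists_isGeneric
  conv_rhs => rw [hfan.facePolynomial_eq_sum hv.neg]
  rw [hfan.facePolynomial_eq_sum hv, Polynomial.sum_comp, Finset.mul_sum]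
  refine Finset.sum_congr rfl fun s hs => ?_
  have hcard := hv.card_negativeRays_neg_add hs
  generalize (negativeRays ray (-v) s).card = a at hcard ⊢
  generalize (negativeRays ray v s).card = b at hcard ⊢
  rw [← hd s hs, ← hcard, Nat.add_sub_cancel, Nat.add_sub_cancel_left]
  simp only [mul_comp, pow_comp, add_comp, one_comp, X_comp]
  rw [show (1 + -(1 + X) : ℤ[X]) = -X by ring, neg_pow (X : ℤ[X]), neg_pow (1 + X : ℤ[X])]
  ring

lemma dehn_sommerville (hfan : IsPolytopalFan ray facets) {d : ℕ}
    (hd : ∀ s ∈ facets, s.card = d) (k : ℕ) :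
    (facePolynomial (faceComplex facets)).coeff k = ∑ i ∈ Finset.Icc k d,
      (-1) ^ (d - i) * (i.choose k : ℤ) * (facePolynomial (faceComplex facets)).coeff i := by
  set f := facePolynomial (faceComplex facets) with hf
  have hdeg : f.natDegree < d + 1 := Nat.lt_succ_of_le <| natDegree_sum_le_of_forall_le _ _
    fun t ht => by
      obtain ⟨s, hs, hts⟩ := mem_faceComplex.1 ht
      exact (natDegree_X_pow_le _).trans (hd s hs ▸ Finset.card_le_card hts)
  have hcoeff : f.coeff k = (-1) ^ d * (f.comp (-(1 + X))).coeff k := by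
    rw [hfan.facePolynomial_comp hd, ← hf, ← coeff_C_mul, C_pow, C_neg, C_1, ← mul_assoc,
      ← mul_pow, neg_one_mul, neg_neg, one_pow, one_mul]
  have hterm : ∀ i, (C (f.coeff i) * (-(1 + X)) ^ i).coeff k =
      f.coeff i * ((-1) ^ i * (i.choose k : ℤ)) := fun i => by
    rw [coeff_C_mul, neg_pow, ← C_1, ← C_neg, ← C_pow, coeff_C_mul, C_1, coeff_one_add_X_pow]
  rw [hcoeff, comp, eval₂_eq_sum_range' _ hdeg, finsetSum_coeff, Finset.mul_sum,
    Finset.range_eq_Ico]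
  symm
  refine Finset.sum_subset_zero_on_sdiff (fun i => ?_) (fun i hi => ?_) fun i hi => ?_
  · simp only [Finset.mem_Icc, Finset.mem_Ico]; omega
  · have hik : i < k := by simp only [Finset.mem_sdiff, Finset.mem_Icc, Finset.mem_Ico] at hi; omega
    rw [hterm, Nat.choose_eq_zero_of_lt hik]
    simp
  · have hid : i ≤ d := (Finset.mem_Icc.1 hi).2
    have hsign : (-1 : ℤ) ^ d * (-1) ^ i = (-1) ^ (d - i) := by
      rw [← Nat.sub_add_cancel hid, pow_add, mul_assoc, ← mul_pow]
      simp
    rw [hterm, ← hsign]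
    ring

end IsPolytopalFan

end Fan

section ExposedFaces

open Filter Topology

variable {E : Type*} [NormedAddCommGroup E] [NormedSpace ℝ E]

lemma convex_union_setOf_lt {B : Set E} (hB : Convex ℝ B) (l : E →L[ℝ] ℝ) {M : ℝ}
    (hBM : ∀ x ∈ B, l x ≤ M) : Convex ℝ (B ∪ {x | l x < M}) := by
  have hle : ∀ x ∈ B ∪ {x | l x < M}, l x ≤ M := by
    rintro x (hx | hx)
    exacts [hBM x hx, le_of_lt hx]
  refine convex_iff_forall_pos.2 fun x hx y hy a b ha hb hab => ?_
  have hcomb : l x < M ∨ l y < M → l (a • x + b • y) < M := by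
    have hM : a * M + b * M = M := by rw [← add_mul, hab, one_mul]
    rw [map_add, map_smul, map_smul, smul_eq_mul, smul_eq_mul]
    rintro (hlt | hlt)
    · linarith [mul_lt_mul_of_pos_left hlt ha, mul_le_mul_of_nonneg_left (hle y hy) hb.le]
    · linarith [mul_le_mul_of_nonneg_left (hle x hx) ha.le, mul_lt_mul_of_pos_left hlt hb]
  rcases hx with hx | hx
  · rcases hy with hy | hy
    · exact Or.inl (hB hx hy ha.le hb.le hab)
    · exact Or.inr (hcomb (Or.inr hy))
  · exact Or.inr (hcomb (Or.inl hx))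

lemma toExposed_convexHull (l : E →L[ℝ] ℝ) (A : Set E) :
    l.toExposed (convexHull ℝ A) = convexHull ℝ (l.toExposed A) := by
  apply Set.Subset.antisymm
  · rintro x ⟨hx, hmax⟩
    have hsub : A ⊆ convexHull ℝ (l.toExposed A) ∪ {y | l y < l x} := fun y hy => by
      rcases (hmax y (subset_convexHull ℝ A hy)).lt_or_eq with hlt | heq
      · exact Or.inr hlt
      · exact Or.inl (subset_convexHull ℝ _
          ⟨hy, fun w hw => heq ▸ hmax w (subset_convexHull ℝ A hw)⟩)
    have hconv := convex_union_setOf_lt (convex_convexHull ℝ (l.toExposed A)) l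
      (M := l x) fun y hy => hmax y (convexHull_mono (fun w hw => hw.1) hy)
    exact (convexHull_min hsub hconv hx).resolve_right (lt_irrefl (l x))
  · refine convexHull_min (fun x hx => ⟨subset_convexHull ℝ A hx.1, fun y hy => ?_⟩)
      (ContinuousLinearMap.toExposed.isExposed.convex (convex_convexHull ℝ A))
    exact convexHull_min (t := {y | l y ≤ l x}) hx.2
      (convex_halfSpace_le l.toLinearMap.isLinear _) hy

lemma exists_subset_eq_convexHull_of_isExposed {A G : Set E}
    (hG : IsExposed ℝ (convexHull ℝ A) G) : ∃ B ⊆ A, G = convexHull ℝ B := by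
  rcases G.eq_empty_or_nonempty with rfl | hne
  · exact ⟨∅, Set.empty_subset A, convexHull_empty.symm⟩
  · obtain ⟨l, rfl⟩ := hG hne
    exact ⟨l.toExposed A, fun x hx => hx.1, toExposed_convexHull l A⟩

lemma exists_pos_toExposed_add_smul {A : Set E} (hA : A.Finite) (l m : E →L[ℝ] ℝ) :
    ∃ ε : ℝ, 0 < ε ∧ (l + ε • m).toExposed A = m.toExposed (l.toExposed A) := by
  have hsmall : ∀ᶠ ε : ℝ in 𝓝[>] 0, ∀ x ∈ A, ∀ y ∈ A, l x < l y →
      0 < (l y - l x) + ε * (m y - m x) := by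
    refine (Filter.eventually_all_finite hA).2 fun x _ =>
      (Filter.eventually_all_finite hA).2 fun y _ => ?_
    by_cases hxy : l x < l y
    · simpa [hxy] using eventually_pos_add_mul (Or.inl (sub_pos.2 hxy))
    · simp [hxy]
  obtain ⟨ε, hε, hpos : 0 < ε⟩ := (hsmall.and self_mem_nhdsWithin).exists
  refine ⟨ε, hpos, ?_⟩
  ext x
  simp only [ContinuousLinearMap.toExposed, Set.mem_ofPred_eq, add_apply, smul_apply, smul_eq_mul]
  constructor
  · rintro ⟨hx, hmax⟩
    have hlx : ∀ y ∈ A, l y ≤ l x := fun y hy =>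
      not_lt.1 fun hlt => by linarith [hmax y hy, hε x hx y hy hlt]
    refine ⟨⟨hx, hlx⟩, fun y hy => ?_⟩
    have hle := hmax y hy.1
    rw [(hlx y hy.1).antisymm (hy.2 x hx)] at hle
    exact le_of_mul_le_mul_left (le_of_add_le_add_left hle) hpos
  · rintro ⟨⟨hx, hlx⟩, hmx⟩
    refine ⟨hx, fun y hy => ?_⟩
    rcases (hlx y hy).lt_or_eq with hlt | heq
    · linarith [hε y hy x hx hlt]
    · rw [heq]
      gcongr
      exact hmx y ⟨hy, fun w hw => heq ▸ hlx w hw⟩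

lemma isExposed_convexHull_trans {A F G : Set E} (hA : A.Finite)
    (hF : IsExposed ℝ (convexHull ℝ A) F) (hG : IsExposed ℝ F G) :
    IsExposed ℝ (convexHull ℝ A) G := by
  intro hne
  obtain ⟨l, rfl⟩ := hF (hne.mono hG.subset)
  obtain ⟨m, hm⟩ := hG hne
  obtain ⟨ε, -, hε⟩ := exists_pos_toExposed_add_smul hA l m
  refine ⟨l + ε • m, ?_⟩
  calc
    G = m.toExposed (l.toExposed (convexHull ℝ A)) := hm
    _ = (l + ε • m).toExposed (convexHull ℝ A) := by simp only [toExposed_convexHull, hε]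

lemma exists_affineMap_eqOn_of_affineIndependent [FiniteDimensional ℝ E] {s : Set E}
    (hs : AffineIndependent ℝ ((↑) : s → E)) (c : E → ℝ) :
    ∃ f : E →ᵃ[ℝ] ℝ, Set.EqOn f c s := by
  classical
  obtain ⟨u, hsu, hu, hspan⟩ := exists_subset_affineIndependent_affineSpan_eq_top hs
  let b : AffineBasis u ℝ E := ⟨(↑), hu, by rw [Subtype.range_coe, hspan]⟩
  have := b.finite
  have := Fintype.ofFinite u
  refine ⟨(Fintype.linearCombination ℝ fun i : u => c i).toAffineMap.comp b.coords,
    fun x hx => ?_⟩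
  have hcoord : ∀ i : u, b.coord i x = if i = ⟨x, hsu hx⟩ then 1 else 0 := fun i =>
    b.coord_apply i ⟨x, hsu hx⟩
  simp [Fintype.linearCombination_apply, hcoord]

lemma isExposed_convexHull_of_affineIndependent [FiniteDimensional ℝ E] {s t : Set E}
    (hs : AffineIndependent ℝ ((↑) : s → E)) (hts : t ⊆ s) :
    IsExposed ℝ (convexHull ℝ s) (convexHull ℝ t) := by
  classical
  intro hne
  obtain ⟨x₀, hx₀⟩ := convexHull_nonempty_iff.1 hne
  obtain ⟨f, hf⟩ := exists_affineMap_eqOn_of_affineIndependent hs (t.indicator 1)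
  let l : E →L[ℝ] ℝ := f.linear.toContinuousLinearMap
  have hl : ∀ x y, l y ≤ l x ↔ f y ≤ f x := fun x y => by
    rw [← sub_nonneg, ← sub_nonneg (b := f y), ← map_sub]
    exact iff_of_eq (congrArg (0 ≤ ·) (f.linearMap_vsub x y))
  refine ⟨l, ?_⟩
  change _ = l.toExposed (convexHull ℝ s)
  rw [toExposed_convexHull]
  congr 1
  ext x
  simp only [ContinuousLinearMap.toExposed, Set.mem_ofPred_eq, hl]
  constructor
  · refine fun hx => ⟨hts hx, fun y hy => ?_⟩
    rw [hf hy, hf (hts hx), Set.indicator_of_mem hx]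
    exact Set.indicator_le_self' (fun _ _ => zero_le_one) y
  · rintro ⟨hx, hmax⟩
    by_contra hxt
    have hle := hmax x₀ (hts hx₀)
    rw [hf hx, hf (hts hx₀), Set.indicator_of_mem hx₀, Set.indicator_of_notMem hxt] at hle
    exact zero_lt_one.not_ge hle

lemma apply_lt_of_mem_interior {C : Set E} {z : E} (hz : z ∈ interior C) {l : E →L[ℝ] ℝ}
    (hl : l ≠ 0) {M : ℝ} (hM : ∀ x ∈ C, l x ≤ M) : l z < M := by
  have hopen : IsOpenMap l := ContinuousLinearMap.isOpenMap_of_ne_zero l hl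
  have hmem : l z ∈ interior (l '' C) := hopen.image_interior_subset C (Set.mem_image_of_mem l hz)
  have hsub : l '' C ⊆ Set.Iic M := Set.image_subset_iff.2 hM
  simpa using interior_mono hsub hmem

lemma exists_normalized_support {C F : Set E} {z : E} (hz : z ∈ interior C)
    (hF : IsExposed ℝ C F) (hne : F.Nonempty) (hproper : F ≠ C) :
    ∃ g : E →L[ℝ] ℝ, (∀ x ∈ C, g (x - z) ≤ 1) ∧ F = {x ∈ C | g (x - z) = 1} := by
  obtain ⟨l, hl⟩ := hF hne
  obtain ⟨x₀, hx₀⟩ := hne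
  rw [hl] at hx₀
  have hl_ne : l ≠ 0 := by
    rintro rfl
    exact hproper (by simpa using hl)
  have hlt : 0 < l x₀ - l z := sub_pos.2 (apply_lt_of_mem_interior hz hl_ne hx₀.2)
  have hval : ∀ x, ((l x₀ - l z)⁻¹ • l) (x - z) = (l x₀ - l z)⁻¹ * (l x - l z) := fun x => by
    rw [smul_apply, smul_eq_mul, map_sub]
  refine ⟨(l x₀ - l z)⁻¹ • l, fun x hx => ?_, ?_⟩
  · rw [hval, inv_mul_le_one₀ hlt]
    exact sub_le_sub_right (hx₀.2 x hx) _
  · rw [hl]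
    ext x
    simp only [Set.mem_ofPred_eq, hval, inv_mul_eq_one₀ hlt.ne', sub_left_inj]
    exact and_congr_right fun hx =>
      ⟨fun hmax => (hmax x₀ hx₀.1).antisymm (hx₀.2 x hx), fun heq y hy => heq ▸ hx₀.2 y hy⟩

lemma exists_gt_add_smul_mem {C : Set E} {z q : E} {t : ℝ} (h : z + t • q ∈ interior C) :
    ∃ t' > t, z + t' • q ∈ C := by
  have hcont : ContinuousAt (fun r : ℝ => z + r • q) t := by fun_prop
  have hmem : ∀ᶠ r : ℝ in 𝓝 t, z + r • q ∈ C :=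
    hcont.eventually (mem_interior_iff_mem_nhds.1 h)
  obtain ⟨t', hC, ht'⟩ := ((hmem.filter_mono nhdsWithin_le_nhds).and
    (self_mem_nhdsWithin : Set.Ioi t ∈ 𝓝[>] t)).exists
  exact ⟨t', ht', hC⟩

lemma exists_pos_add_smul_mem_frontier {C : Set E} (hC : IsCompact C) {z q : E}
    (hz : z ∈ interior C) (hq : q ≠ 0) : ∃ t : ℝ, 0 < t ∧ z + t • q ∈ frontier C := by
  have hemb : IsClosedEmbedding (fun t : ℝ => z + t • q) :=
    (Homeomorph.addLeft z).isClosedEmbedding.comp (isClosedEmbedding_smul_left hq)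
  have hne : ((fun t : ℝ => z + t • q) ⁻¹' C).Nonempty := ⟨0, by simpa using interior_subset hz⟩
  obtain ⟨t, ht, hmax⟩ := (hemb.isCompact_preimage hC).exists_isGreatest hne
  refine ⟨t, ?_, subset_closure ht, fun hinterior => ?_⟩
  · obtain ⟨t', ht', hmem⟩ := exists_gt_add_smul_mem (q := q) (t := 0) (by simpa using hz)
    exact ht'.trans_le (hmax hmem)
  · obtain ⟨t', ht', hmem⟩ := exists_gt_add_smul_mem hinterior
    exact ht'.not_ge (hmax hmem)

end ExposedFaces

section ExtremePoints

section Module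

variable {E : Type*} [AddCommGroup E] [Module ℝ E]

lemma mem_of_mem_extremePoints_of_mem_convexHull {C t : Set E} (hC : Convex ℝ C) (ht : t ⊆ C)
    {x : E} (hx : x ∈ C.extremePoints ℝ) (hxt : x ∈ convexHull ℝ t) : x ∈ t :=
  extremePoints_convexHull_subset
    (inter_extremePoints_subset_extremePoints_of_subset (convexHull_min ht hC) ⟨hxt, hx⟩)

lemma injOn_convexHull_of_subset_extremePoints {C : Set E} (hC : Convex ℝ C) :
    Set.InjOn (convexHull ℝ) {t | t ⊆ C.extremePoints ℝ} := by
  have hsub : ∀ t t' : Set E, t ⊆ C.extremePoints ℝ → t' ⊆ C.extremePoints ℝ →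
      convexHull ℝ t = convexHull ℝ t' → t ⊆ t' := fun t t' ht ht' heq x hx =>
    mem_of_mem_extremePoints_of_mem_convexHull hC (ht'.trans extremePoints_subset) (ht hx)
      (heq ▸ subset_convexHull ℝ t hx)
  exact fun t ht t' ht' heq => (hsub t t' ht ht' heq).antisymm (hsub t' t ht' ht heq.symm)

end Module

lemma subset_extremePoints_of_isExposed {E : Type*} [NormedAddCommGroup E] [NormedSpace ℝ E]
    [FiniteDimensional ℝ E] {C s : Set E}
    (hs : AffineIndependent ℝ ((↑) : s → E)) (hC : IsExposed ℝ C (convexHull ℝ s)) :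
    s ⊆ C.extremePoints ℝ := fun x hx => by
  have hexp := isExposed_convexHull_of_affineIndependent hs (Set.singleton_subset_iff.2 hx)
  rw [convexHull_singleton] at hexp
  exact isExtreme_singleton.1 (hC.isExtreme.trans hexp.isExtreme)

end ExtremePoints

section Spans

variable {E : Type*} [AddCommGroup E] [Module ℝ E]

lemma vectorSpan_convexHull (s : Set E) : vectorSpan ℝ (convexHull ℝ s) = vectorSpan ℝ s := by
  rw [← direction_affineSpan, affineSpan_convexHull, direction_affineSpan]

lemma linearIndepOn_sub_of_affineIndependent {s : Finset E}
    (hs : AffineIndependent ℝ ((↑) : s → E)) {z : E} {g : E →ₗ[ℝ] ℝ}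
    (hg : ∀ x ∈ s, g (x - z) = 1) : LinearIndepOn ℝ (fun x => x - z) (s : Set E) := by
  rw [linearIndepOn_finset_iff]
  intro w hw
  have hsum : ∑ x ∈ s, w x = 0 := calc
    ∑ x ∈ s, w x = g (∑ x ∈ s, w x • (x - z)) := by
      rw [map_sum]
      exact Finset.sum_congr rfl fun x hx => by rw [map_smul, hg x hx, smul_eq_mul, mul_one]
    _ = 0 := by rw [hw, map_zero]
  have hcomb : ∑ x ∈ s, w x • x = 0 := by
    simpa only [smul_sub, Finset.sum_sub_distrib, ← Finset.sum_smul, hsum, zero_smul, sub_zero]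
      using hw
  exact hs.eq_zero_of_sum_eq_zero_subtype hsum hcomb

lemma isBasisOn_sub_of_affineIndependent [FiniteDimensional ℝ E] {s : Finset E}
    (hs : AffineIndependent ℝ ((↑) : s → E)) (hcard : s.card = Module.finrank ℝ E) {z : E}
    {g : E →ₗ[ℝ] ℝ} (hg : ∀ x ∈ s, g (x - z) = 1) : IsBasisOn (fun x => x - z) s := by
  have hli := linearIndepOn_sub_of_affineIndependent hs hg
  refine ⟨hli, ?_⟩
  rw [Set.image_eq_range]
  exact LinearIndependent.span_eq_top_of_card_eq_finrank' hli (by simpa using hcard)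

lemma sub_mem_simplicialCone {s : Finset E} {z : E} (hs : IsBasisOn (fun x => x - z) s) {x : E}
    (hx : x ∈ convexHull ℝ (s : Set E)) : x - z ∈ simplicialCone (fun x => x - z) s := by
  classical
  refine convexHull_min (t := {y | y - z ∈ simplicialCone (fun x => x - z) s}) ?_ ?_ hx
  · intro y hy i hi
    rw [hs.coneCoord_ray hi hy]
    split_ifs <;> norm_num
  · intro y hy w hw a b ha hb hab i hi
    have hsub : a • y + b • w - z = a • (y - z) + b • (w - z) := by
      rw [smul_sub, smul_sub, sub_add_sub_comm, ← add_smul, hab, one_smul]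
    rw [hsub, map_add, map_smul, map_smul]
    exact add_nonneg (mul_nonneg ha (hy i hi)) (mul_nonneg hb (hw i hi))

lemma finrank_vectorSpan_add_one_of_insert_eq_top [FiniteDimensional ℝ E] {A : Set E} {z : E}
    (hspan : vectorSpan ℝ (insert z A) = ⊤) {f : E →ₗ[ℝ] ℝ} (hf : f ≠ 0)
    (hconst : ∀ x ∈ A, ∀ y ∈ A, f x = f y) :
    Module.finrank ℝ (vectorSpan ℝ A) + 1 = Module.finrank ℝ E := by
  have hker : vectorSpan ℝ A ≤ LinearMap.ker f := by
    rw [vectorSpan_def, Submodule.span_le]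
    rintro _ ⟨x, hx, y, hy, rfl⟩
    simp [hconst x hx y hy]
  have hlt : Module.finrank ℝ (vectorSpan ℝ A) < Module.finrank ℝ E :=
    Submodule.finrank_lt fun htop => hf (LinearMap.ker_eq_top.1 (top_unique (htop ▸ hker)))
  have hle := finrank_vectorSpan_insert_le_set ℝ A z
  rw [hspan, finrank_top] at hle
  omega

end Spans

section Topology

variable {E : Type*} [NormedAddCommGroup E] [NormedSpace ℝ E] [FiniteDimensional ℝ E]

lemma isClosed_simplicialCone {ι : Type*} (ray : ι → E) (s : Finset ι) :
    IsClosed (simplicialCone ray s) := by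
  have heq : simplicialCone ray s = ⋂ i ∈ s, {q | 0 ≤ coneCoord ray s i q} := by
    ext q
    simp [simplicialCone]
  rw [heq]
  exact isClosed_biInter fun i _ =>
    isClosed_le continuous_const (LinearMap.continuous_of_finiteDimensional _)

lemma dense_compl_biUnion_submodule {W : Set (Submodule ℝ E)} (hW : W.Finite) (htop : ⊤ ∉ W) :
    Dense (⋃ w ∈ W, (w : Set E))ᶜ := by
  have := FiniteDimensional.complete ℝ E
  simp only [Set.compl_iUnion]
  refine dense_biInter_of_isOpen (fun w _ => w.closed_of_finiteDimensional.isOpen_compl)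
    hW.countable fun w hw => ?_
  rw [← interior_eq_empty_iff_dense_compl, Set.eq_empty_iff_forall_notMem]
  exact fun x hx => htop (w.eq_top_of_nonempty_interior' ⟨x, hx⟩ ▸ hw)

end Topology

lemma sdim_convexHull_add_one {n : ℕ} {t : Finset (EuclideanSpace ℝ (Fin n))}
    (ht : AffineIndependent ℝ ((↑) : t → EuclideanSpace ℝ (Fin n))) (hne : t.Nonempty) :
    sdim (convexHull ℝ (t : Set (EuclideanSpace ℝ (Fin n)))) + 1 = t.card := by
  have := hne.to_subtype
  rw [sdim, vectorSpan_convexHull, ← Fintype.card_coe, ← ht.finrank_vectorSpan_add_one,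
    Subtype.range_coe_subtype, Finset.setOfPred_mem]

namespace ConvexPolytope

variable {n : ℕ} {P : ConvexPolytope n} {z : EuclideanSpace ℝ (Fin n)}

lemma isCompact_carrier : IsCompact P.carrier := P.verts.finite_toSet.isCompact_convexHull ℝ

lemma convex_carrier : Convex ℝ P.carrier := convex_convexHull ℝ _

lemma sdim_carrier : sdim P.carrier = n := by
  rw [sdim, carrier, vectorSpan_convexHull, ← direction_affineSpan,
    affineSpan_eq_top_of_nonempty_interior P.nonempty_int, AffineSubspace.direction_top,
    finrank_top, finrank_euclideanSpace_fin]

lemma IsSimplicial.dim_pos (hP : P.IsSimplicial) : 0 < n := by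
  rcases Nat.eq_zero_or_pos n with rfl | hn
  · have hne : P.carrier.Nonempty := P.nonempty_int.mono interior_subset
    obtain ⟨s, hcard, -, hs⟩ := hP P.carrier ⟨IsExposed.refl _, hne, sdim_carrier⟩
    rw [hs, Finset.card_eq_zero.1 hcard] at hne
    simp at hne
  · exact hn

open Classical in
/-- The vertex sets of those facets of `P` that are simplices: the sets of `n` affinely independent
vertices whose convex hull is an exposed face. -/
def facetVertexSets (P : ConvexPolytope n) : Finset (Finset (EuclideanSpace ℝ (Fin n))) :=
  P.verts.powerset.filter fun s => s.card = n ∧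
    AffineIndependent ℝ ((↑) : s → EuclideanSpace ℝ (Fin n)) ∧
    IsExposed ℝ P.carrier (convexHull ℝ (s : Set (EuclideanSpace ℝ (Fin n))))

variable {s : Finset (EuclideanSpace ℝ (Fin n))}

lemma mem_facetVertexSets : s ∈ P.facetVertexSets ↔ s.card = n ∧
    AffineIndependent ℝ ((↑) : s → EuclideanSpace ℝ (Fin n)) ∧
    IsExposed ℝ P.carrier (convexHull ℝ (s : Set (EuclideanSpace ℝ (Fin n)))) := by
  simp only [facetVertexSets, Finset.mem_filter, Finset.mem_powerset, and_iff_right_iff_imp]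
  rintro ⟨-, hind, hexp⟩ x hx
  exact extremePoints_convexHull_subset (subset_extremePoints_of_isExposed hind hexp hx)

lemma subset_extremePoints_of_mem_facetVertexSets (hs : s ∈ P.facetVertexSets) :
    (s : Set (EuclideanSpace ℝ (Fin n))) ⊆ P.carrier.extremePoints ℝ :=
  subset_extremePoints_of_isExposed (mem_facetVertexSets.1 hs).2.1 (mem_facetVertexSets.1 hs).2.2

lemma IsSimplicial.exists_mem_facetVertexSets (hP : P.IsSimplicial)
    {F : Set (EuclideanSpace ℝ (Fin n))} (hF : F ∈ P.faces (n - 1)) :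
    ∃ s ∈ P.facetVertexSets, F = convexHull ℝ s := by
  obtain ⟨s, hcard, hind, rfl⟩ := hP F hF
  exact ⟨s, mem_facetVertexSets.2 ⟨hcard, hind, hF.1⟩, rfl⟩

lemma exists_facet_support (hn : 0 < n) (hz : z ∈ interior P.carrier)
    (hs : s ∈ P.facetVertexSets) :
    ∃ g : EuclideanSpace ℝ (Fin n) →L[ℝ] ℝ, (∀ x ∈ P.carrier, g (x - z) ≤ 1) ∧
      convexHull ℝ (s : Set (EuclideanSpace ℝ (Fin n))) = {x ∈ P.carrier | g (x - z) = 1} := by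
  obtain ⟨hcard, hind, hexp⟩ := mem_facetVertexSets.1 hs
  have hne : s.Nonempty := Finset.card_pos.1 (by omega)
  refine exists_normalized_support hz hexp (convexHull_nonempty_iff.2 hne) fun heq => ?_
  have hdim := sdim_convexHull_add_one hind hne
  rw [heq, sdim_carrier, hcard] at hdim
  omega

lemma isBasisOn_of_mem_facetVertexSets (hn : 0 < n) (hz : z ∈ interior P.carrier)
    (hs : s ∈ P.facetVertexSets) : IsBasisOn (fun x => x - z) s := by
  obtain ⟨hcard, hind, -⟩ := mem_facetVertexSets.1 hs
  obtain ⟨g, -, hg⟩ := exists_facet_support hn hz hs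
  refine isBasisOn_sub_of_affineIndependent (g := g) hind (by simpa using hcard) fun x hx =>
    (hg.subset (subset_convexHull ℝ _ hx)).2

lemma exists_mem_faces_of_generic (hn : 0 < n) (hz : z ∈ interior P.carrier)
    {q : EuclideanSpace ℝ (Fin n)}
    (hq : ∀ A ⊆ (P.verts : Set (EuclideanSpace ℝ (Fin n))), q ∈ vectorSpan ℝ (insert z A) →
      vectorSpan ℝ (insert z A) = ⊤) :
    ∃ F ∈ P.faces (n - 1), ∃ c : ℝ, 0 < c ∧ z + c • q ∈ F := by
  have : Nontrivial (EuclideanSpace ℝ (Fin n)) :=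
    Module.nontrivial_of_finrank_pos (R := ℝ) (by simpa using hn)
  have hq_ne : q ≠ 0 := fun h =>
    bot_ne_top ((vectorSpan_singleton ℝ z).symm.trans (by simpa [h] using hq ∅ (by simp)))
  obtain ⟨c, hc, hfront⟩ := exists_pos_add_smul_mem_frontier isCompact_carrier hz hq_ne
  have hmem : z + c • q ∈ P.carrier := isCompact_carrier.isClosed.frontier_subset hfront
  obtain ⟨f, hf, hmax⟩ :=
    geometric_hahn_banach_of_nonempty_interior_point convex_carrier hfront.2 ⟨z, hz⟩
  have hmemF : z + c • q ∈ f.toExposed P.carrier := ⟨hmem, hmax⟩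
  have hF : f.toExposed P.carrier = convexHull ℝ (f.toExposed P.verts) := toExposed_convexHull ..
  refine ⟨_, ⟨ContinuousLinearMap.toExposed.isExposed, ⟨_, hmemF⟩, ?_⟩, c, hc, hmemF⟩
  have hcq : c • q ∈ vectorSpan ℝ (insert z (f.toExposed P.verts)) := by
    have hsub := vsub_mem_vectorSpan ℝ
      (convexHull_mono (Set.subset_insert z _) (hF ▸ hmemF))
      (subset_convexHull ℝ _ (Set.mem_insert z (f.toExposed P.verts)))
    rwa [vectorSpan_convexHull, vsub_eq_sub, add_sub_cancel_left] at hsub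
  have hspan := hq _ (fun x hx => hx.1) ((Submodule.smul_mem_iff _ hc.ne').1 hcq)
  have hrank := finrank_vectorSpan_add_one_of_insert_eq_top hspan (f := f.toLinearMap)
    (fun h => hf (ContinuousLinearMap.coe_injective h))
    fun x hx y hy => (hy.2 x hx.1).antisymm (hx.2 y hy.1)
  rw [finrank_euclideanSpace_fin] at hrank
  rw [hF, sdim, vectorSpan_convexHull]
  omega

-- The cones over the facets have closed union, and this union contains every generic direction.
lemma IsSimplicial.exists_mem_simplicialCone (hP : P.IsSimplicial) (hz : z ∈ interior P.carrier)
    (q : EuclideanSpace ℝ (Fin n)) :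
    ∃ s ∈ P.facetVertexSets, q ∈ simplicialCone (fun x => x - z) s := by
  let walls : Set (Submodule ℝ (EuclideanSpace ℝ (Fin n))) :=
    (fun A => vectorSpan ℝ (insert z A)) '' {A | A ⊆ P.verts} \ {⊤}
  have hdense := dense_compl_biUnion_submodule (W := walls)
    ((P.verts.finite_toSet.finite_subsets.image _).sdiff) fun h => h.2 rfl
  let cones := ⋃ s ∈ P.facetVertexSets, simplicialCone (fun x => x - z) s
  have hclosed : IsClosed cones :=
    isClosed_biUnion_finset fun s _ => isClosed_simplicialCone _ s
  have hgeneric : (⋃ w ∈ walls, (w : Set (EuclideanSpace ℝ (Fin n))))ᶜ ⊆ cones := fun v hv => by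
    obtain ⟨F, hF, c, hc, hmem⟩ := exists_mem_faces_of_generic (P := P) (q := v) hP.dim_pos hz
      fun A hA hvA => by
        by_contra htop
        exact hv (Set.mem_biUnion ⟨Set.mem_image_of_mem _ hA, htop⟩ hvA)
    obtain ⟨s, hs, rfl⟩ := hP.exists_mem_facetVertexSets hF
    have hcone := sub_mem_simplicialCone (isBasisOn_of_mem_facetVertexSets hP.dim_pos hz hs) hmem
    rw [add_sub_cancel_left] at hcone
    exact Set.mem_biUnion hs (mem_simplicialCone_of_smul_mem hc hcone)
  have hq : q ∈ cones := hclosed.closure_subset_iff.2 hgeneric (hdense q)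
  simpa [cones] using hq

lemma IsSimplicial.isPolytopalFan (hP : P.IsSimplicial) (hz : z ∈ interior P.carrier) :
    IsPolytopalFan (fun x => x - z) P.facetVertexSets where
  isBasisOn _ hs := isBasisOn_of_mem_facetVertexSets hP.dim_pos hz hs
  exists_support s hs := by
    obtain ⟨g, hg_le, hg⟩ := exists_facet_support hP.dim_pos hz hs
    refine ⟨g, fun i hi => (hg.subset (subset_convexHull ℝ _ hi)).2, fun s' hs' i hi his => ?_⟩
    have hextreme := subset_extremePoints_of_mem_facetVertexSets hs' hi
    refine (hg_le i hextreme.1).lt_of_ne fun heq => his ?_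
    exact mem_of_mem_extremePoints_of_mem_convexHull convex_carrier
      ((subset_extremePoints_of_mem_facetVertexSets hs).trans extremePoints_subset) hextreme
      (hg.superset ⟨hextreme.1, heq⟩)
  exists_mem_simplicialCone := hP.exists_mem_simplicialCone hz

-- If the cone over the facet `s` contains the sum of the rays over the vertices `A` of `G`, then
-- the functional of `s` is at least `|A|` on that sum, so it equals `1` on each of these rays.
lemma IsSimplicial.exists_facet_superset (hP : P.IsSimplicial)
    {G : Set (EuclideanSpace ℝ (Fin n))} (hG : IsExposed ℝ P.carrier G) (hne : G.Nonempty)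
    (hproper : G ≠ P.carrier) : ∃ s ∈ P.facetVertexSets, G ⊆ convexHull ℝ s := by
  obtain ⟨z, hz⟩ := P.nonempty_int
  obtain ⟨g, hg_le, hg⟩ := exists_normalized_support hz hG hne hproper
  obtain ⟨A, hA, hGA⟩ := exists_subset_eq_convexHull_of_isExposed hG
  lift A to Finset (EuclideanSpace ℝ (Fin n)) using P.verts.finite_toSet.subset hA
  obtain ⟨s, hs, hcone⟩ := hP.exists_mem_simplicialCone hz (∑ x ∈ A, (x - z))
  obtain ⟨g', hg'_le, hg'⟩ := exists_facet_support hP.dim_pos hz hs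
  have hbasis := isBasisOn_of_mem_facetVertexSets hP.dim_pos hz hs
  have hvert : ∀ x ∈ A, x ∈ P.carrier := fun x hx => subset_convexHull ℝ _ (hA hx)
  have hle : ∑ x ∈ A, g (x - z) ≤ ∑ x ∈ A, g' (x - z) := calc
    ∑ x ∈ A, g (x - z) = g.toLinearMap (∑ x ∈ A, (x - z)) := (map_sum g _ _).symm
    _ ≤ ∑ i ∈ s, coneCoord (fun x => x - z) s i (∑ x ∈ A, (x - z)) :=
      hbasis.apply_le_sum_coneCoord (fun i hi => hg_le i
        (subset_extremePoints_of_mem_facetVertexSets hs hi).1) hcone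
    _ = g'.toLinearMap (∑ x ∈ A, (x - z)) := by
      rw [hbasis.apply_eq_sum_coneCoord g'.toLinearMap]
      refine Finset.sum_congr rfl fun i hi => ?_
      have hone : g'.toLinearMap (i - z) = 1 := (hg'.subset (subset_convexHull ℝ _ hi)).2
      rw [hone, mul_one]
    _ = ∑ x ∈ A, g' (x - z) := map_sum g' _ _
  have hg_one : ∀ x ∈ A, g (x - z) = 1 := fun x hx =>
    (hg.subset (hGA.superset (subset_convexHull ℝ _ hx))).2
  have hle_each : ∀ x ∈ A, g' (x - z) ≤ g (x - z) := fun x hx =>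
    (hg'_le x (hvert x hx)).trans_eq (hg_one x hx).symm
  have heq := (Finset.sum_eq_sum_iff_of_le hle_each).1 ((Finset.sum_le_sum hle_each).antisymm hle)
  refine ⟨s, hs, hGA ▸ convexHull_min (fun x hx => ?_) (convex_convexHull ℝ _)⟩
  exact hg'.superset ⟨hvert x hx, (heq x hx).trans (hg_one x hx)⟩

lemma IsSimplicial.exists_subset_facet (hP : P.IsSimplicial)
    {G : Set (EuclideanSpace ℝ (Fin n))} (hG : IsExposed ℝ P.carrier G) (hne : G.Nonempty)
    (hproper : G ≠ P.carrier) : ∃ s ∈ P.facetVertexSets, ∃ t ⊆ s, G = convexHull ℝ t := by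
  obtain ⟨s, hs, hGs⟩ := hP.exists_facet_superset hG hne hproper
  obtain ⟨t, hts, rfl⟩ := exists_subset_eq_convexHull_of_isExposed
    (hG.mono (mem_facetVertexSets.1 hs).2.2.subset hGs)
  lift t to Finset (EuclideanSpace ℝ (Fin n)) using s.finite_toSet.subset hts
  exact ⟨s, hs, t, by exact_mod_cast hts, rfl⟩

open Classical in
lemma IsSimplicial.faces_eq_image (hP : P.IsSimplicial) {k : ℕ} (hk : k < n) :
    P.faces k = (fun t : Finset (EuclideanSpace ℝ (Fin n)) => convexHull ℝ (t : Set _)) ''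
      ((faceComplex P.facetVertexSets).filter fun t => t.card = k + 1 : Finset (Finset _)) := by
  ext F
  simp only [Set.mem_image, Finset.mem_coe, Finset.mem_filter, mem_faceComplex]
  constructor
  · rintro ⟨hexp, hne, hdim⟩
    obtain ⟨s, hs, t, hts, rfl⟩ := hP.exists_subset_facet hexp hne fun heq => by
      rw [heq, sdim_carrier] at hdim
      omega
    have hind := (mem_facetVertexSets.1 hs).2.1.mono (Finset.coe_subset.2 hts)
    have hcard := sdim_convexHull_add_one hind (convexHull_nonempty_iff.1 hne)
    exact ⟨t, ⟨⟨s, hs, hts⟩, by omega⟩, rfl⟩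
  · rintro ⟨t, ⟨⟨s, hs, hts⟩, hcard⟩, rfl⟩
    obtain ⟨-, hind, hexp⟩ := mem_facetVertexSets.1 hs
    have hne : t.Nonempty := Finset.card_pos.1 (by omega)
    have hdim := sdim_convexHull_add_one (hind.mono (Finset.coe_subset.2 hts)) hne
    exact ⟨isExposed_convexHull_trans P.verts.finite_toSet hexp
      (isExposed_convexHull_of_affineIndependent hind (Finset.coe_subset.2 hts)),
      convexHull_nonempty_iff.2 hne, by omega⟩

open Classical in
lemma IsSimplicial.fcount_eq_card (hP : P.IsSimplicial) {k : ℕ} (hk : k < n) :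
    P.fcount k = ((faceComplex P.facetVertexSets).filter fun t => t.card = k + 1).card := by
  have hsub : ∀ t ∈ faceComplex P.facetVertexSets,
      (t : Set (EuclideanSpace ℝ (Fin n))) ⊆ P.carrier.extremePoints ℝ := fun t ht => by
    obtain ⟨s, hs, hts⟩ := mem_faceComplex.1 ht
    exact (Finset.coe_subset.2 hts).trans (subset_extremePoints_of_mem_facetVertexSets hs)
  rw [fcount, hP.faces_eq_image hk, Set.InjOn.ncard_image, Set.ncard_coe_finset]
  intro t ht t' ht' heq
  exact Finset.coe_injective (injOn_convexHull_of_subset_extremePoints convex_carrier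
    (hsub t (Finset.mem_filter.1 ht).1) (hsub t' (Finset.mem_filter.1 ht').1) heq)

open Classical in
lemma IsSimplicial.coeff_facePolynomial_eq_fZ (hP : P.IsSimplicial) {k : ℕ} (hk : k ≤ n) :
    (facePolynomial (faceComplex P.facetVertexSets)).coeff k = P.fZ ((k : ℤ) - 1) := by
  rw [coeff_facePolynomial]
  congr 1
  rcases k with _ | k
  · obtain ⟨z, hz⟩ := P.nonempty_int
    obtain ⟨s, hs, -⟩ := hP.exists_mem_simplicialCone hz 0
    have hempty : ((faceComplex P.facetVertexSets).filter fun t => t.card = 0) = {∅} := by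
      ext t
      simp only [Finset.mem_filter, Finset.card_eq_zero, Finset.mem_singleton, mem_faceComplex,
        and_iff_right_iff_imp]
      rintro rfl
      exact ⟨s, hs, Finset.empty_subset s⟩
    rw [hempty]
    simp [fZ]
  · rw [← hP.fcount_eq_card (by omega), fZ, if_neg (by omega), if_pos (by omega)]
    simp

end ConvexPolytope

lemma dehn_sommerville_solve_seven {f : ℕ → ℤ} (hzero : f 0 = 1)
    (hf : ∀ k ≤ 7, f k = ∑ i ∈ Finset.Icc k 7, (-1) ^ (7 - i) * (i.choose k : ℤ) * f i) :
    f 4 = 5 * f 3 - 15 * f 2 + 35 * f 1 - 70 ∧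
      f 5 = 9 * f 3 - 34 * f 2 + 84 * f 1 - 168 ∧
      f 6 = 7 * f 3 - 28 * f 2 + 70 * f 1 - 140 ∧
      f 7 = 2 * f 3 - 8 * f 2 + 20 * f 1 - 40 := by
  have h0 : f 0 = -f 0 + f 1 - f 2 + f 3 - f 4 + f 5 - f 6 + f 7 := by
    simpa [Finset.sum_Icc_succ_top, Nat.choose, sub_eq_add_neg] using hf 0 (by norm_num)
  have h2 : f 2 = -f 2 + 3 * f 3 - 6 * f 4 + 10 * f 5 - 15 * f 6 + 21 * f 7 := by
    simpa [Finset.sum_Icc_succ_top, Nat.choose, sub_eq_add_neg] using hf 2 (by norm_num)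
  have h4 : f 4 = -f 4 + 5 * f 5 - 15 * f 6 + 35 * f 7 := by
    simpa [Finset.sum_Icc_succ_top, Nat.choose, sub_eq_add_neg] using hf 4 (by norm_num)
  have h6 : f 6 = -f 6 + 7 * f 7 := by
    simpa [Finset.sum_Icc_succ_top, Nat.choose, sub_eq_add_neg] using hf 6 (by norm_num)
  refine ⟨?_, ?_, ?_, ?_⟩ <;> linarith

open ConvexPolytope in
theorem dehn_sommerville_dim_seven_general {n : ℕ} (P : ConvexPolytope n) (hs : P.IsSimplicial)
    {k : ℕ} (hk : k ≤ n) :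
    (P.fZ ((k : ℤ) - 1) : ℤ) = ∑ i ∈ Finset.Icc k n,
      (-1) ^ (n - i) * (i.choose k : ℤ) * P.fZ ((i : ℤ) - 1) := by
  classical
  obtain ⟨z, hz⟩ := P.nonempty_int
  rw [← hs.coeff_facePolynomial_eq_fZ hk, (hs.isPolytopalFan hz).dehn_sommerville
    fun s hs => (mem_facetVertexSets.1 hs).1]
  exact Finset.sum_congr rfl fun i hi => by
    rw [hs.coeff_facePolynomial_eq_fZ (Finset.mem_Icc.1 hi).2]

/-- The Dehn–Sommerville relations for a `7`-dimensional simplicial convex polytope. -/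
theorem dehn_sommerville_dim_seven (P : ConvexPolytope 7) (hs : P.IsSimplicial) :
    (P.fcount 3 : ℤ) = 5 * P.fcount 2 - 15 * P.fcount 1 + 35 * P.fcount 0 - 70 ∧
      (P.fcount 4 : ℤ) = 9 * P.fcount 2 - 34 * P.fcount 1 + 84 * P.fcount 0 - 168 ∧
      (P.fcount 5 : ℤ) = 7 * P.fcount 2 - 28 * P.fcount 1 + 70 * P.fcount 0 - 140 ∧
      (P.fcount 6 : ℤ) = 2 * P.fcount 2 - 8 * P.fcount 1 + 20 * P.fcount 0 - 40 := by
  simpa [ConvexPolytope.fZ] using dehn_sommerville_solve_seven (f := fun k => P.fZ ((k : ℤ) - 1))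
    (by simp [ConvexPolytope.fZ]) fun k hk => dehn_sommerville_dim_seven_general P hs hk
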